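/- arXiv:2010.03227 — 2 statements merged into one kernel-verified Lean document; each statement's English description precedes it below -/
import Mathlib

section
/- Each of the semantic learning restrictions Caut (cautious), Dec (decisive), WMon (weakly monotonic), Mon (monotonic), SMon (strongly monotonic) and NU (non-U-shaped), viewed as a predicate β on pairs (learner, informant), is semantically delayable: for every admissible simulating function 𝔰, all informants I, I' and all learners M, M', if for all t ∈ ℕ one has pos(I'[t]) ⊇ pos(I[𝔰(t)]), neg(I'[t]) ⊇ neg(I[𝔰(t)]) and W_{M'(I'[t])} = W_{M(I[𝔰(t)])}, then β(M,I) implies β(M',I'). -/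
/-- `W p` is the domain of the `p`-th partial computable function
(the `W`-hypothesis space for an acceptable numbering). -/
def W (p : ℕ) : Set ℕ := {n | ((Denumerable.ofNat Nat.Partrec.Code p).eval n).Dom}

/-- A labeled datum: a natural number together with a Boolean label. -/
abbrev Datum := ℕ × Bool

/-- The initial segment `I[t]` of an informant `I`, of length `t`. -/
def seg (I : ℕ → Datum) (t : ℕ) : List Datum := (List.range t).map I

/-- The positively labeled numbers occurring in a finite sequence. -/
def posOf (σ : List Datum) : Set ℕ := {x | (x, true) ∈ σ}

/-- The negatively labeled numbers occurring in a finite sequence. -/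
def negOf (σ : List Datum) : Set ℕ := {x | (x, false) ∈ σ}

/-- A finite sequence over ℕ × Bool is consistently labeled. -/
def ConsistentSeq (σ : List Datum) : Prop :=
  ∀ x b b', (x, b) ∈ σ → (x, b') ∈ σ → b = b'

/-- `I` is an informant for the language `L`. -/
def IsInformant (L : Set ℕ) (I : ℕ → Datum) : Prop :=
  (∀ t, ((I t).2 = true ↔ (I t).1 ∈ L)) ∧ Function.Surjective (fun t => (I t).1)

/-- `M` Ex-learns `L` from the particular informant `I`. -/
def ExLearnsFrom (M : List Datum →. ℕ) (L : Set ℕ) (I : ℕ → Datum) : Prop :=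
  ∃ t₀ e, W e = L ∧ ∀ t, t₀ ≤ t → M (seg I t) = Part.some e

/-- `M` Ex-learns `L` from informant. -/
def ExLearns (M : List Datum →. ℕ) (L : Set ℕ) : Prop :=
  ∀ I, IsInformant L I → ExLearnsFrom M L I

/-- `M` is an iterative learner: its value on `σ⌢x` is computed from its
value on `σ` and the datum `x` alone. -/
def Iterative (M : List Datum →. ℕ) : Prop :=
  ∃ h : ℕ × Datum →. ℕ, Partrec h ∧
    ∀ σ x, M (σ ++ [x]) = (M σ).bind (fun e => h (e, x))

/-- `𝓛 ∈ [ItInfEx]`: some iterative partial computable learner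
Ex-learns every member of `𝓛` from informant. -/
def ItInfEx (𝓛 : Set (Set ℕ)) : Prop :=
  ∃ M : List Datum →. ℕ, Partrec M ∧ Iterative M ∧ ∀ L ∈ 𝓛, ExLearns M L

/-- The set of numbers about which the informant `I` gives positive information. -/
def posI (I : ℕ → Datum) : Set ℕ := {y | ∃ t, I t = (y, true)}

/-- `σ` is consistent with the set `A`: `pos(σ) ⊆ A` and `neg(σ) ⊆ ℕ\A`. -/
def ConsWith (σ : List Datum) (A : Set ℕ) : Prop := posOf σ ⊆ A ∧ negOf σ ⊆ Aᶜ

/-- `M` is cautious on `I`. -/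
def CautOn (M : List Datum →. ℕ) (I : ℕ → Datum) : Prop :=
  ∀ s t, s ≤ t → ∀ es et, M (seg I s) = Part.some es → M (seg I t) = Part.some et →
    ¬ (W et ⊂ W es)

/-- `M` is decisive on `I`. -/
def DecOn (M : List Datum →. ℕ) (I : ℕ → Datum) : Prop :=
  ∀ r s t, r ≤ s → s ≤ t → ∀ er es et,
    M (seg I r) = Part.some er → M (seg I s) = Part.some es → M (seg I t) = Part.some et →
    W er = W et → W er = W es

/-- `M` is weakly monotonic on `I`. -/
def WMonOn (M : List Datum →. ℕ) (I : ℕ → Datum) : Prop :=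
  ∀ s t, s ≤ t → ∀ es et, M (seg I s) = Part.some es → M (seg I t) = Part.some et →
    ConsWith (seg I t) (W es) → W es ⊆ W et

/-- `M` is monotonic on `I`. -/
def MonOn (M : List Datum →. ℕ) (I : ℕ → Datum) : Prop :=
  ∀ s t, s ≤ t → ∀ es et, M (seg I s) = Part.some es → M (seg I t) = Part.some et →
    W es ∩ posI I ⊆ W et ∩ posI I

/-- `M` is strongly monotonic on `I`. -/
def SMonOn (M : List Datum →. ℕ) (I : ℕ → Datum) : Prop :=
  ∀ s t, s ≤ t → ∀ es et, M (seg I s) = Part.some es → M (seg I t) = Part.some et →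
    W es ⊆ W et

/-- `M` is non-U-shaped on `I`. -/
def NUOn (M : List Datum →. ℕ) (I : ℕ → Datum) : Prop :=
  ∀ r s t, r ≤ s → s ≤ t → ∀ er es et,
    M (seg I r) = Part.some er → M (seg I s) = Part.some es → M (seg I t) = Part.some et →
    W er = posI I → W et = posI I → W er = W es

/-- An admissible simulating function: non-decreasing and unbounded. -/
def Admissible (s : ℕ → ℕ) : Prop := Monotone s ∧ ∀ x, ∃ t, x ≤ s t

/-- A predicate `β` on (learner, informant) pairs is semantically delayable. -/
def SemDelayable (β : (List Datum →. ℕ) → (ℕ → Datum) → Prop) : Prop :=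
  ∀ s : ℕ → ℕ, Admissible s →
    ∀ (M M' : List Datum →. ℕ) (I I' : ℕ → Datum),
      (∃ L, IsInformant L I) → (∃ L', IsInformant L' I') →
      (∀ t, posOf (seg I (s t)) ⊆ posOf (seg I' t) ∧
            negOf (seg I (s t)) ⊆ negOf (seg I' t) ∧
            ∃ e e', M (seg I (s t)) = Part.some e ∧ M' (seg I' t) = Part.some e' ∧
              W e' = W e) →
      β M I → β M' I'

/-! Each of the six restrictions constrains the sets `W h` conjectured at two or three weakly
increasing times, so precomposing with a monotone delay preserves it as soon as the constraint
itself transfers. For weak monotonicity it does because `I'[t]` contains the data of `I[s t]`, so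
fewer sets are consistent with it; for the two restrictions that mention the language, it does
because an unbounded delay passes on every datum of `I`, and an informant that contains all data of
another informant is labeled by the same language. -/

/-- Every conjecture of `M'` on `I'` at time `t` denotes the same set as the conjecture of `M` on
`I` at time `s t`. Where `M'` is undefined nothing is required. -/
def DelayedHyps (s : ℕ → ℕ) (M : List Datum →. ℕ) (I : ℕ → Datum)
    (M' : List Datum →. ℕ) (I' : ℕ → Datum) : Prop :=
  ∀ t e', M' (seg I' t) = Part.some e' → ∃ e, M (seg I (s t)) = Part.some e ∧ W e' = W e

/-- `R t A B` holds whenever `A` and `B` are conjectured at times `s ≤ t`: the common shape of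
`CautOn`, `WMonOn`, `MonOn` and `SMonOn`. Only the later time is passed to `R`, because among these
only `WMonOn` depends on time, through `I[t]`. -/
def HypsPairwise (R : ℕ → Set ℕ → Set ℕ → Prop) (M : List Datum →. ℕ) (I : ℕ → Datum) : Prop :=
  ∀ s t, s ≤ t → ∀ es et, M (seg I s) = Part.some es → M (seg I t) = Part.some et →
    R t (W es) (W et)

/-- `R A B C` holds whenever `A`, `B` and `C` are conjectured at times `r ≤ s ≤ t`: the common
shape of `DecOn` and `NUOn`. -/
def HypsTriplewise (R : Set ℕ → Set ℕ → Set ℕ → Prop) (M : List Datum →. ℕ)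
    (I : ℕ → Datum) : Prop :=
  ∀ r s t, r ≤ s → s ≤ t → ∀ er es et,
    M (seg I r) = Part.some er → M (seg I s) = Part.some es → M (seg I t) = Part.some et →
    R (W er) (W es) (W et)

section Delay

variable {s : ℕ → ℕ} {M M' : List Datum →. ℕ} {I I' : ℕ → Datum}

theorem DelayedHyps.of_forall_exists
    (h : ∀ t, ∃ e e', M (seg I (s t)) = Part.some e ∧ M' (seg I' t) = Part.some e' ∧ W e' = W e) :
    DelayedHyps s M I M' I' := by
  intro t e₁ he₁
  obtain ⟨e, e', he, he', hW⟩ := h t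
  obtain rfl : e₁ = e' := Part.some_injective (he₁.symm.trans he')
  exact ⟨e, he, hW⟩

theorem HypsPairwise.delay {R R' : ℕ → Set ℕ → Set ℕ → Prop} (hM : HypsPairwise R M I)
    (hs : Monotone s) (hd : DelayedHyps s M I M' I')
    (hR : ∀ t A B, R (s t) A B → R' t A B) : HypsPairwise R' M' I' := by
  intro a b hab ea eb ha hb
  obtain ⟨fa, hfa, hWa⟩ := hd a ea ha
  obtain ⟨fb, hfb, hWb⟩ := hd b eb hb
  rw [hWa, hWb]
  exact hR _ _ _ (hM _ _ (hs hab) _ _ hfa hfb)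

theorem HypsTriplewise.delay {R : Set ℕ → Set ℕ → Set ℕ → Prop} (hM : HypsTriplewise R M I)
    (hs : Monotone s) (hd : DelayedHyps s M I M' I') : HypsTriplewise R M' I' := by
  intro a b c hab hbc ea eb ec ha hb hc
  obtain ⟨fa, hfa, hWa⟩ := hd a ea ha
  obtain ⟨fb, hfb, hWb⟩ := hd b eb hb
  obtain ⟨fc, hfc, hWc⟩ := hd c ec hc
  rw [hWa, hWb, hWc]
  exact hM _ _ _ (hs hab) (hs hbc) _ _ _ hfa hfb hfc

theorem CautOn.delay (hM : CautOn M I) (hs : Monotone s) (hd : DelayedHyps s M I M' I') :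
    CautOn M' I' :=
  HypsPairwise.delay (R := fun _ A B ↦ ¬ B ⊂ A) hM hs hd fun _ _ _ ↦ id

theorem DecOn.delay (hM : DecOn M I) (hs : Monotone s) (hd : DelayedHyps s M I M' I') :
    DecOn M' I' :=
  HypsTriplewise.delay (R := fun A B C ↦ A = C → A = B) hM hs hd

theorem ConsWith.mono {σ τ : List Datum} {A : Set ℕ} (hpos : posOf σ ⊆ posOf τ)
    (hneg : negOf σ ⊆ negOf τ) (h : ConsWith τ A) : ConsWith σ A :=
  ⟨hpos.trans h.1, hneg.trans h.2⟩

theorem WMonOn.delay (hM : WMonOn M I) (hs : Monotone s) (hd : DelayedHyps s M I M' I')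
    (hpos : ∀ t, posOf (seg I (s t)) ⊆ posOf (seg I' t))
    (hneg : ∀ t, negOf (seg I (s t)) ⊆ negOf (seg I' t)) : WMonOn M' I' :=
  HypsPairwise.delay (R := fun t A B ↦ ConsWith (seg I t) A → A ⊆ B)
    (R' := fun t A B ↦ ConsWith (seg I' t) A → A ⊆ B) hM hs hd
    fun t _ _ hAB hcons ↦ hAB (hcons.mono (hpos t) (hneg t))

theorem MonOn.delay (hM : MonOn M I) (hs : Monotone s) (hd : DelayedHyps s M I M' I')
    (hpos : posI I' ⊆ posI I) : MonOn M' I' :=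
  HypsPairwise.delay (R := fun _ A B ↦ A ∩ posI I ⊆ B ∩ posI I)
    (R' := fun _ A B ↦ A ∩ posI I' ⊆ B ∩ posI I') hM hs hd
    fun _ _ _ hAB _ hx ↦ ⟨(hAB ⟨hx.1, hpos hx.2⟩).1, hx.2⟩

theorem SMonOn.delay (hM : SMonOn M I) (hs : Monotone s) (hd : DelayedHyps s M I M' I') :
    SMonOn M' I' :=
  HypsPairwise.delay (R := fun _ A B ↦ A ⊆ B) hM hs hd fun _ _ _ ↦ id

theorem NUOn.delay (hM : NUOn M I) (hs : Monotone s) (hd : DelayedHyps s M I M' I')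
    (hpos : posI I' = posI I) : NUOn M' I' := by
  unfold NUOn
  rw [hpos]
  exact HypsTriplewise.delay (R := fun A B C ↦ A = posI I → C = posI I → A = B) hM hs hd

end Delay

section Informant

variable {L L' : Set ℕ} {I I' : ℕ → Datum} {s : ℕ → ℕ}

theorem mem_seg {t : ℕ} {d : Datum} : d ∈ seg I t ↔ ∃ k < t, I k = d := by
  simp only [seg, List.mem_map, List.mem_range]

theorem mem_range_of_forall_mem_seg {d : Datum} (hs : ∀ n, ∃ t, n ≤ s t)
    (h : ∀ t, d ∈ seg I (s t) → d ∈ seg I' t) (hd : d ∈ Set.range I) : d ∈ Set.range I' := by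
  obtain ⟨k, hk⟩ := hd
  obtain ⟨t, hkt⟩ := hs (k + 1)
  obtain ⟨j, -, hj⟩ := mem_seg.1 (h t (mem_seg.2 ⟨k, hkt, hk⟩))
  exact ⟨j, hj⟩

theorem IsInformant.mem_range_iff (hI : IsInformant L I) {x : ℕ} {b : Bool} :
    (x, b) ∈ Set.range I ↔ (b = true ↔ x ∈ L) := by
  constructor
  · rintro ⟨t, ht⟩
    simpa only [ht] using hI.1 t
  · intro hb
    obtain ⟨t, rfl⟩ := hI.2 x
    exact ⟨t, Prod.ext rfl (Bool.eq_iff_iff.2 ((hI.1 t).trans hb.symm))⟩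

theorem IsInformant.posI_eq (hI : IsInformant L I) : posI I = L :=
  Set.ext fun _ ↦ hI.mem_range_iff.trans (iff_true_left rfl)

theorem IsInformant.language_eq_of_range_subset (hI : IsInformant L I) (hI' : IsInformant L' I')
    (h : Set.range I ⊆ Set.range I') : L = L' := by
  ext x
  obtain ⟨t, rfl⟩ := hI.2 x
  exact (hI.1 t).symm.trans (hI'.mem_range_iff.1 (h (Set.mem_range_self t)))

theorem IsInformant.posI_eq_of_delay (hI : IsInformant L I) (hI' : IsInformant L' I')
    (hs : ∀ n, ∃ t, n ≤ s t)
    (hpos : ∀ t, posOf (seg I (s t)) ⊆ posOf (seg I' t))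
    (hneg : ∀ t, negOf (seg I (s t)) ⊆ negOf (seg I' t)) : posI I' = posI I := by
  have hrange : Set.range I ⊆ Set.range I' := by
    rintro ⟨x, _ | _⟩ hx
    · exact mem_range_of_forall_mem_seg hs (fun t ↦ @hneg t x) hx
    · exact mem_range_of_forall_mem_seg hs (fun t ↦ @hpos t x) hx
  rw [hI'.posI_eq, hI.posI_eq, hI.language_eq_of_range_subset hI' hrange]

end Informant

/-- The semantic learning restrictions Caut, Dec, WMon, Mon, SMon and NU are
all semantically delayable. -/
theorem semantic_restrictions_delayable :
    SemDelayable CautOn ∧ SemDelayable DecOn ∧ SemDelayable WMonOn ∧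
    SemDelayable MonOn ∧ SemDelayable SMonOn ∧ SemDelayable NUOn := by
  refine ⟨?_, ?_, ?_, ?_, ?_, ?_⟩ <;>
    intro s ⟨hs, hunb⟩ M M' I I' ⟨L, hI⟩ ⟨L', hI'⟩ h hM <;>
    have hpos := fun t ↦ (h t).1 <;>
    have hneg := fun t ↦ (h t).2.1 <;>
    have hd : DelayedHyps s M I M' I' := .of_forall_exists fun t ↦ (h t).2.2
  · exact hM.delay hs hd
  · exact hM.delay hs hd
  · exact hM.delay hs hd hpos hneg
  · exact hM.delay hs hd (hI.posI_eq_of_delay hI' hunb hpos hneg).subset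
  · exact hM.delay hs hd
  · exact hM.delay hs hd (hI.posI_eq_of_delay hI' hunb hpos hneg)
end

section
/- Let v_1, …, v_d be pairwise orthogonal nonzero vectors in ℝ^d and let h = (Σ_{i=1}^d v_i/‖v_i‖²) / (Σ_{i=1}^d 1/‖v_i‖²) be the vector from the origin to the hyperplane through the heads of v_1, …, v_d and orthogonal to it. Then ‖h‖ = 1/√(Σ_{i=1}^d 1/‖v_i‖²). -/
open RealInnerProductSpace

/-- The vector `h = (Σ vᵢ/‖vᵢ‖²) / (Σ 1/‖vᵢ‖²)` from the origin to the hyperplane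
through the heads of `v₁, …, v_d` and orthogonal to it. -/
noncomputable def orthoPoint (d : ℕ) (v : Fin d → EuclideanSpace ℝ (Fin d)) :
    EuclideanSpace ℝ (Fin d) :=
  (∑ i, (1 : ℝ) / ‖v i‖ ^ 2)⁻¹ • ∑ i, ((1 : ℝ) / ‖v i‖ ^ 2) • v i

/-!
Let `w = Σ vᵢ/‖vᵢ‖²` and `S = Σ 1/‖vᵢ‖²`. Orthogonality gives `⟪w, vᵢ⟫ = 1` for every `i`, so
expanding one argument of `⟪w, w⟫` yields `‖w‖² = S`. Hence `h = w/S = w/‖w‖²` is the image of `w`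
under inversion in the unit sphere, and its norm is `1/‖w‖ = 1/√S`.
-/

section HeadsNormal

variable {ι E : Type*} [Fintype ι] [NormedAddCommGroup E] [InnerProductSpace ℝ E]

/-- The vector `w = Σ vᵢ/‖vᵢ‖²`, normal to the affine span of pairwise orthogonal nonzero
vectors `vᵢ`. It is scaled so that this span lies in the hyperplane `⟪w, x⟫ = 1`. -/
noncomputable def headsNormal (v : ι → E) : E :=
  ∑ i, ((1 : ℝ) / ‖v i‖ ^ 2) • v i

theorem inner_headsNormal {v : ι → E} (horth : Pairwise fun i j ↦ ⟪v i, v j⟫ = 0)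
    {i : ι} (hi : v i ≠ 0) : ⟪headsNormal v, v i⟫ = 1 := by
  calc
    ⟪headsNormal v, v i⟫ = ∑ j, 1 / ‖v j‖ ^ 2 * ⟪v j, v i⟫ := by
      simp only [headsNormal, sum_inner, real_inner_smul_left]
    _ = 1 / ‖v i‖ ^ 2 * ⟪v i, v i⟫ :=
      Fintype.sum_eq_single i fun j hj ↦ by rw [horth hj, mul_zero]
    _ = 1 := by
      rw [real_inner_self_eq_norm_sq, one_div_mul_cancel (pow_ne_zero 2 (norm_ne_zero_iff.mpr hi))]

theorem headsNormal_ne_zero [Nonempty ι] {v : ι → E} (hv0 : ∀ i, v i ≠ 0)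
    (horth : Pairwise fun i j ↦ ⟪v i, v j⟫ = 0) : headsNormal v ≠ 0 := by
  obtain ⟨i⟩ := ‹Nonempty ι›
  intro hw
  simpa [hw] using inner_headsNormal horth (hv0 i)

theorem norm_headsNormal_sq {v : ι → E} (hv0 : ∀ i, v i ≠ 0)
    (horth : Pairwise fun i j ↦ ⟪v i, v j⟫ = 0) :
    ‖headsNormal v‖ ^ 2 = ∑ i, 1 / ‖v i‖ ^ 2 := by
  calc
    ‖headsNormal v‖ ^ 2 = ⟪headsNormal v, headsNormal v⟫ :=
      (real_inner_self_eq_norm_sq _).symm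
    _ = ∑ i, 1 / ‖v i‖ ^ 2 * ⟪headsNormal v, v i⟫ := by
      simp only [headsNormal, inner_sum, real_inner_smul_right]
    _ = ∑ i, 1 / ‖v i‖ ^ 2 := by
      simp only [inner_headsNormal horth (hv0 _), mul_one]

theorem orthoPoint_norm_general [Nonempty ι] {v : ι → E} (hv0 : ∀ i, v i ≠ 0)
    (horth : Pairwise fun i j ↦ ⟪v i, v j⟫ = 0) :
    ‖(∑ i, 1 / ‖v i‖ ^ 2)⁻¹ • ∑ i, ((1 : ℝ) / ‖v i‖ ^ 2) • v i‖ =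
      1 / Real.sqrt (∑ i, 1 / ‖v i‖ ^ 2) := by
  have hw : ‖headsNormal v‖ ≠ 0 := norm_ne_zero_iff.mpr (headsNormal_ne_zero hv0 horth)
  rw [← headsNormal, ← norm_headsNormal_sq hv0 horth, Real.sqrt_sq (norm_nonneg _)]
  calc
    ‖(‖headsNormal v‖ ^ 2)⁻¹ • headsNormal v‖ = (‖headsNormal v‖ ^ 2)⁻¹ * ‖headsNormal v‖ := by
      simp only [norm_smul, norm_inv, norm_pow, norm_norm]
    _ = 1 / ‖headsNormal v‖ := by
      rw [sq, mul_inv, inv_mul_cancel_right₀ hw, one_div]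

end HeadsNormal

/-- For pairwise orthogonal nonzero vectors `v₁, …, v_d` in `ℝ^d`, the vector `h` from
the origin to the hyperplane through their heads, orthogonal to it, has norm
`1/√(Σ 1/‖vᵢ‖²)`. -/
theorem orthoPoint_norm (d : ℕ) (hd : 1 ≤ d)
    (v : Fin d → EuclideanSpace ℝ (Fin d)) (hv0 : ∀ i, v i ≠ 0)
    (horth : ∀ i j, i ≠ j → ⟪v i, v j⟫ = 0) :
    ‖orthoPoint d v‖ = 1 / Real.sqrt (∑ i, 1 / ‖v i‖ ^ 2) :=
  have : Nonempty (Fin d) := ⟨⟨0, hd⟩⟩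
  orthoPoint_norm_general hv0 horth
end
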